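/- Let α, β ≥ -1/2 and T > 0. Starting from the representation ℋ_t^{(α,β)}(θ,φ) = c_{α,β} sinh(t/2) ∬ (cosh(t/2) - 1 + q(θ,φ,u,v))^{-(α+β+2)} dΠ_α(u)dΠ_β(v) with q(θ,φ,u,v) = 1 - u sin(θ/2)sin(φ/2) - v cos(θ/2)cos(φ/2), one has, uniformly in θ, φ ∈ [0,π] and 0 < t ≤ T: ℋ_t^{(α,β)}(θ,φ) ≃ (t² + θ² + φ²)^{-α-1/2} (t² + (π-θ)² + (π-φ)²)^{-β-1/2} · t/(t² + (θ-φ)²). -/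

import Mathlib

open Real MeasureTheory

/-- The measure Π_ν on [-1,1]: density (Γ(ν+1)/(√π Γ(ν+1/2)))(1-s²)^{ν-1/2} for ν > -1/2,
and (δ_{-1}+δ_1)/2 for ν = -1/2. -/
noncomputable def jacobiPi (ν : ℝ) : Measure ℝ :=
  if ν = -1/2 then
    (1/2 : ENNReal) • (Measure.dirac (-1) + Measure.dirac 1)
  else
    (volume.restrict (Set.Icc (-1 : ℝ) 1)).withDensity
      (fun s => ENNReal.ofReal
        (Real.Gamma (ν + 1) / (Real.sqrt π * Real.Gamma (ν + 1/2)) * (1 - s ^ 2) ^ (ν - 1/2)))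

/-- Total mass μ_{a,b}(0,π) of the measure (sin(θ/2))^{2a+1}(cos(θ/2))^{2b+1} dθ. -/
noncomputable def muab (a b : ℝ) : ℝ :=
  ∫ θ in Set.Icc (0 : ℝ) π, (Real.sin (θ/2)) ^ (2 * a + 1) * (Real.cos (θ/2)) ^ (2 * b + 1)

/-- The constant c_{α,β} = 2^{-α-β-1}/μ_{α,β}(0,π). -/
noncomputable def cab (a b : ℝ) : ℝ := (2 : ℝ) ^ (-a - b - 1) / muab a b

/-- q(θ,φ,u,v) = 1 - u sin(θ/2)sin(φ/2) - v cos(θ/2)cos(φ/2). -/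
noncomputable def qfun (θ φ u v : ℝ) : ℝ :=
  1 - u * Real.sin (θ/2) * Real.sin (φ/2) - v * Real.cos (θ/2) * Real.cos (φ/2)

/-- The Poisson–Jacobi kernel ℋ_t^{(α,β)}, via its integral representation. -/
noncomputable def poissonJacobi (a b : ℝ) (t θ φ : ℝ) : ℝ :=
  cab a b * Real.sinh (t/2) *
    ∫ u, (∫ v, (Real.cosh (t/2) - 1 + qfun θ φ u v) ^ (-(a + b + 2)) ∂(jacobiPi b))
      ∂(jacobiPi a)

/-- A finite measure on `[-1, 1]` whose mass of `[1 - r, 1]` is comparable to `r ^ p`. -/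
structure HasTailGrowth (μ : Measure ℝ) (p : ℝ) : Prop where
  finite : IsFiniteMeasure μ
  ae_mem : ∀ᵐ s ∂μ, s ∈ Set.Icc (-1 : ℝ) 1
  lower : ∃ c : ℝ, 0 < c ∧ ∀ r : ℝ, 0 < r → r ≤ 1 → c * r ^ p ≤ μ.real (Set.Ici (1 - r))
  upper : ∃ C : ℝ, 0 < C ∧ ∀ r : ℝ, 0 < r → μ.real (Set.Ici (1 - r)) ≤ C * r ^ p

lemma hasTailGrowth_dirac :
    HasTailGrowth ((1/2 : ENNReal) • (Measure.dirac (-1 : ℝ) + Measure.dirac 1)) 0 where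
  finite := by
    refine ⟨?_⟩
    simp
  ae_mem := by
    refine Measure.ae_smul_measure ?_ _
    rw [ae_add_measure_iff]
    constructor <;> rw [ae_dirac_iff (by measurability)] <;> norm_num
  lower := by
    refine ⟨1/2, by norm_num, fun r hr hr1 => ?_⟩
    have h : (-1 : ℝ) ∉ Set.Ici (1 - r) := by simp; linarith
    have h1 : (1 : ℝ) ∈ Set.Ici (1 - r) := by simp; linarith
    simp only [Measure.real, Measure.smul_apply, Measure.add_apply,
      Measure.dirac_apply' _ measurableSet_Ici, Set.indicator_of_notMem h,
      Set.indicator_of_mem h1]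
    simp
  upper := by
    refine ⟨1, by norm_num, fun r hr => ?_⟩
    have : IsProbabilityMeasure
        ((1/2 : ENNReal) • (Measure.dirac (-1 : ℝ) + Measure.dirac 1)) := by
      refine ⟨?_⟩
      simp [ENNReal.inv_two_add_inv_two]
    rw [rpow_zero, mul_one]
    exact measureReal_le_one

lemma rpow_mem_of_mem_Icc_one_two (q : ℝ) {x : ℝ} (h1 : 1 ≤ x) (h2 : x ≤ 2) :
    min 1 ((2 : ℝ) ^ q) ≤ x ^ q ∧ x ^ q ≤ max 1 ((2 : ℝ) ^ q) := by
  have h0 : (0 : ℝ) < x := by linarith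
  rcases le_total 0 q with hq | hq
  · exact ⟨(min_le_left _ _).trans (one_le_rpow h1 hq),
      (rpow_le_rpow h0.le h2 hq).trans (le_max_right _ _)⟩
  · exact ⟨(min_le_right _ _).trans (rpow_le_rpow_of_nonpos h0 h2 hq),
      (rpow_le_one_of_one_le_of_nonpos h1 hq).trans (le_max_left _ _)⟩

lemma intervalIntegrable_one_sub_rpow {q : ℝ} (hq : -1 < q) (x y : ℝ) :
    IntervalIntegrable (fun s : ℝ => (1 - s) ^ q) volume x y := by
  simpa using
    (intervalIntegral.intervalIntegrable_rpow' (a := 1 - x) (b := 1 - y) hq).comp_sub_left 1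

lemma intervalIntegrable_one_add_rpow {q : ℝ} (hq : -1 < q) (x y : ℝ) :
    IntervalIntegrable (fun s : ℝ => (1 + s) ^ q) volume x y := by
  simpa [add_comm] using
    (intervalIntegral.intervalIntegrable_rpow' (a := x + 1) (b := y + 1) hq).comp_add_right 1

lemma integral_one_sub_rpow {q : ℝ} (hq : -1 < q) {r : ℝ} :
    ∫ s in (1 - r)..1, (1 - s) ^ q = r ^ (q + 1) / (q + 1) := by
  have h : q + 1 ≠ 0 := by linarith
  rw [intervalIntegral.integral_comp_sub_left (fun s => s ^ q), integral_rpow (Or.inl hq)]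
  simp [zero_rpow h]

lemma one_sub_sq_rpow {q s : ℝ} (hs : s ∈ Set.Icc (-1 : ℝ) 1) :
    (1 - s ^ 2) ^ q = (1 - s) ^ q * (1 + s) ^ q := by
  rw [← mul_rpow (by linarith [hs.2]) (by linarith [hs.1])]
  ring_nf

lemma integrableOn_one_sub_sq_rpow {q : ℝ} (hq : -1 < q) :
    IntegrableOn (fun s : ℝ => (1 - s ^ 2) ^ q) (Set.Icc (-1) 1) := by
  have h1 := intervalIntegrable_one_sub_rpow hq (-1) 1
  have h2 := intervalIntegrable_one_add_rpow hq (-1) 1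
  rw [intervalIntegrable_iff_integrableOn_Icc_of_le (by norm_num)] at h1 h2
  refine Integrable.mono' ((h1.add h2).const_mul (max 1 ((2 : ℝ) ^ q)))
    (Measurable.aestronglyMeasurable (by fun_prop)) ?_
  filter_upwards [ae_restrict_mem measurableSet_Icc] with s hs
  have e1 : 0 ≤ (1 - s) ^ q := rpow_nonneg (by linarith [hs.2]) _
  have e2 : 0 ≤ (1 + s) ^ q := rpow_nonneg (by linarith [hs.1]) _
  have hM : 0 ≤ max 1 ((2 : ℝ) ^ q) := le_max_of_le_left zero_le_one
  rw [one_sub_sq_rpow hs, Real.norm_of_nonneg (mul_nonneg e1 e2)]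
  simp only [Pi.add_apply]
  rcases le_total s 0 with h | h
  · have := (rpow_mem_of_mem_Icc_one_two q (x := 1 - s) (by linarith) (by linarith [hs.1])).2
    nlinarith
  · have := (rpow_mem_of_mem_Icc_one_two q (x := 1 + s) (by linarith) (by linarith [hs.2])).2
    nlinarith

lemma hasTailGrowth_density {q K : ℝ} (hq : -1 < q) (hK : 0 < K) :
    HasTailGrowth ((volume.restrict (Set.Icc (-1 : ℝ) 1)).withDensity
      (fun s => ENNReal.ofReal (K * (1 - s ^ 2) ^ q))) (q + 1) := by
  set w : ℝ → ℝ := fun s => K * (1 - s ^ 2) ^ q with hw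
  set μ := (volume.restrict (Set.Icc (-1 : ℝ) 1)).withDensity (fun s => ENNReal.ofReal (w s))
    with hμ
  have hint : IntegrableOn w (Set.Icc (-1) 1) := (integrableOn_one_sub_sq_rpow hq).const_mul K
  have hw0 : ∀ s ∈ Set.Icc (-1 : ℝ) 1, 0 ≤ w s := fun s hs =>
    mul_nonneg hK.le (rpow_nonneg (by nlinarith [hs.1, hs.2]) _)
  have hfin : IsFiniteMeasure μ := isFiniteMeasure_withDensity_ofReal hint.2
  have hreal : ∀ r : ℝ, 0 < r → r ≤ 1 → μ.real (Set.Ici (1 - r)) = ∫ s in (1 - r)..1, w s := by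
    intro r hr hr1
    have hset : Set.Ici (1 - r) ∩ Set.Icc (-1 : ℝ) 1 = Set.Icc (1 - r) 1 := by
      ext s
      simp only [Set.mem_inter_iff, Set.mem_Ici, Set.mem_Icc]
      constructor
      · rintro ⟨h1, h2, h3⟩
        exact ⟨h1, h3⟩
      · rintro ⟨h1, h2⟩
        exact ⟨h1, by linarith, h2⟩
    have hsub : Set.Icc (1 - r) 1 ⊆ Set.Icc (-1 : ℝ) 1 :=
      Set.Icc_subset_Icc_left (by linarith)
    rw [Measure.real, hμ, withDensity_apply _ measurableSet_Ici,
      Measure.restrict_restrict measurableSet_Ici, hset,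
      ← ofReal_integral_eq_lintegral_ofReal (hint.mono_set hsub)
        ((ae_restrict_iff' measurableSet_Icc).2 (Filter.Eventually.of_forall
          fun s hs => hw0 s (hsub hs))),
      ENNReal.toReal_ofReal (setIntegral_nonneg measurableSet_Icc fun s hs => hw0 s (hsub hs)),
      intervalIntegral.integral_of_le (by linarith), integral_Icc_eq_integral_Ioc]
  have hwint : ∀ r : ℝ, 0 < r → r ≤ 1 → IntervalIntegrable w volume (1 - r) 1 := by
    intro r hr hr1
    rw [intervalIntegrable_iff_integrableOn_Icc_of_le (by linarith)]
    exact hint.mono_set (Set.Icc_subset_Icc_left (by linarith))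
  have hq1 : 0 < q + 1 := by linarith
  have hmin : 0 < min 1 ((2 : ℝ) ^ q) := lt_min one_pos (rpow_pos_of_pos two_pos _)
  have hmax : 0 < max 1 ((2 : ℝ) ^ q) := lt_max_of_lt_left one_pos
  refine ⟨hfin, ?_, ⟨K * min 1 ((2 : ℝ) ^ q) / (q + 1), by positivity, ?_⟩,
    ⟨K * max 1 ((2 : ℝ) ^ q) / (q + 1) + μ.real Set.univ, by positivity, ?_⟩⟩
  · exact (withDensity_absolutelyContinuous _ _) (ae_restrict_mem measurableSet_Icc)
  · intro r hr hr1
    rw [hreal r hr hr1]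
    calc K * min 1 ((2 : ℝ) ^ q) / (q + 1) * r ^ (q + 1)
        = ∫ s in (1 - r)..1, K * min 1 ((2 : ℝ) ^ q) * (1 - s) ^ q := by
          rw [intervalIntegral.integral_const_mul, integral_one_sub_rpow hq]; ring
      _ ≤ _ := by
          refine intervalIntegral.integral_mono_on (by linarith)
            ((intervalIntegrable_one_sub_rpow hq _ _).const_mul _) (hwint r hr hr1) ?_
          intro s hs
          have := (rpow_mem_of_mem_Icc_one_two q (x := 1 + s) (by linarith [hs.1])
            (by linarith [hs.2])).1
          have e1 : 0 ≤ (1 - s) ^ q := rpow_nonneg (by linarith [hs.2]) _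
          rw [hw]
          simp only
          rw [one_sub_sq_rpow ⟨by linarith [hs.1], hs.2⟩, mul_assoc]
          rw [mul_comm ((1 - s) ^ q)]
          gcongr
  · intro r hr
    rcases le_total r 1 with hr1 | hr1
    · have hup : μ.real (Set.Ici (1 - r)) ≤ K * max 1 ((2 : ℝ) ^ q) / (q + 1) * r ^ (q + 1) := by
        rw [hreal r hr hr1]
        calc _ ≤ ∫ s in (1 - r)..1, K * max 1 ((2 : ℝ) ^ q) * (1 - s) ^ q := by
              refine intervalIntegral.integral_mono_on (by linarith) (hwint r hr hr1)
                ((intervalIntegrable_one_sub_rpow hq _ _).const_mul _) ?_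
              intro s hs
              have := (rpow_mem_of_mem_Icc_one_two q (x := 1 + s) (by linarith [hs.1])
                (by linarith [hs.2])).2
              have e1 : 0 ≤ (1 - s) ^ q := rpow_nonneg (by linarith [hs.2]) _
              rw [hw]
              simp only
              rw [one_sub_sq_rpow ⟨by linarith [hs.1], hs.2⟩, mul_assoc]
              rw [mul_comm ((1 - s) ^ q)]
              gcongr
          _ = _ := by
              rw [intervalIntegral.integral_const_mul, integral_one_sub_rpow hq]; ring
      have : 0 ≤ μ.real Set.univ * r ^ (q + 1) := by positivity
      linarith [add_mul (K * max 1 ((2 : ℝ) ^ q) / (q + 1)) (μ.real Set.univ) (r ^ (q + 1))]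
    · have h1 : 1 ≤ r ^ (q + 1) := one_le_rpow hr1 hq1.le
      have h2 : μ.real (Set.Ici (1 - r)) ≤ μ.real Set.univ := measureReal_mono (Set.subset_univ _)
      have h3 : 0 ≤ K * max 1 ((2 : ℝ) ^ q) / (q + 1) * r ^ (q + 1) := by positivity
      have h4 : 0 ≤ μ.real Set.univ := measureReal_nonneg
      nlinarith

lemma hasTailGrowth_jacobiPi {ν : ℝ} (hν : -1/2 ≤ ν) :
    HasTailGrowth (jacobiPi ν) (ν + 1/2) := by
  unfold jacobiPi
  split_ifs with h
  · subst h
    convert hasTailGrowth_dirac using 1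
    norm_num
  · have hν' : -1/2 < ν := lt_of_le_of_ne hν (Ne.symm h)
    have hK : 0 < Real.Gamma (ν + 1) / (Real.sqrt π * Real.Gamma (ν + 1/2)) := by
      have h1 : 0 < Real.Gamma (ν + 1) := Real.Gamma_pos_of_pos (by linarith)
      have h2 : 0 < Real.Gamma (ν + 1/2) := Real.Gamma_pos_of_pos (by linarith)
      positivity
    convert hasTailGrowth_density (q := ν - 1/2) (by linarith) hK using 1
    ring

lemma exists_dyadic_scale {m x : ℝ} {N : ℕ} (hx : x ≤ 2 ^ (N + 1) * m) :
    ∃ k ∈ Finset.range (N + 1), x ≤ 2 ^ (k + 1) * m ∧ 2 ^ k * m ≤ max m x := by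
  induction N with
  | zero => exact ⟨0, by simp, by simpa using hx, by simp⟩
  | succ N ih =>
    rcases le_total x (2 ^ (N + 1) * m) with h | h
    · obtain ⟨k, hk, h1⟩ := ih h
      exact ⟨k, Finset.mem_range.2 (by have := Finset.mem_range.1 hk; omega), h1⟩
    · exact ⟨N + 1, by simp, hx, h.trans (le_max_right _ _)⟩

lemma max_le_div_of_mem_Icc {A B s : ℝ} (hB : 0 ≤ B) (hAB : B < A) (hs : s ∈ Set.Icc (-1 : ℝ) 1) :
    A / 3 * max ((A - B) / A) (1 - s) ≤ A - B * s := by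
  have hA : 0 < A := hB.trans_lt hAB
  rw [mul_max_of_nonneg _ _ (by positivity)]
  refine max_le ?_ ?_
  · have : A / 3 * ((A - B) / A) = (A - B) / 3 := by field_simp
    rw [this]
    nlinarith [hs.2]
  · nlinarith [hs.1, hs.2]

lemma rpow_neg_le_dyadic_sum {A B s γ : ℝ} (hB : 0 ≤ B) (hAB : B < A) (hγ : 0 ≤ γ)
    (hs : s ∈ Set.Icc (-1 : ℝ) 1) {N : ℕ} (hN : 2 ≤ 2 ^ (N + 1) * ((A - B) / A)) :
    (A - B * s) ^ (-γ) ≤ ∑ k ∈ Finset.range (N + 1), (A / 3 * (2 ^ k * ((A - B) / A))) ^ (-γ) *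
      (Set.Ici (1 - 2 ^ (k + 1) * ((A - B) / A))).indicator 1 s := by
  have hA : 0 < A := hB.trans_lt hAB
  have hm : 0 < (A - B) / A := div_pos (by linarith) hA
  obtain ⟨k, hk, h1, h2⟩ := exists_dyadic_scale (x := 1 - s) (by linarith [hs.1])
  have h3 : A / 3 * (2 ^ k * ((A - B) / A)) ≤ A - B * s :=
    (mul_le_mul_of_nonneg_left h2 (by positivity)).trans (max_le_div_of_mem_Icc hB hAB hs)
  have hmem : s ∈ Set.Ici (1 - 2 ^ (k + 1) * ((A - B) / A)) := by
    simp only [Set.mem_Ici]; linarith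
  calc (A - B * s) ^ (-γ) ≤ (A / 3 * (2 ^ k * ((A - B) / A))) ^ (-γ) :=
        rpow_le_rpow_of_nonpos (by positivity) h3 (by linarith)
    _ = (A / 3 * (2 ^ k * ((A - B) / A))) ^ (-γ) *
      (Set.Ici (1 - 2 ^ (k + 1) * ((A - B) / A))).indicator 1 s := by
        rw [Set.indicator_of_mem hmem, Pi.one_apply, mul_one]
    _ ≤ _ := by
        refine Finset.single_le_sum (f := fun k => (A / 3 * (2 ^ k * ((A - B) / A))) ^ (-γ) *
          (Set.Ici (1 - 2 ^ (k + 1) * ((A - B) / A))).indicator 1 s) (fun i _ => ?_) hk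
        exact mul_nonneg (rpow_nonneg (by positivity) _)
          (Set.indicator_nonneg (fun _ _ => zero_le_one) _)

lemma dyadic_term_eq {A m γ p : ℝ} (hA : 0 < A) (hm : 0 < m) (k : ℕ) :
    (A / 3 * (2 ^ k * m)) ^ (-γ) * (2 ^ (k + 1) * m) ^ p =
      ((3 : ℝ) ^ γ * 2 ^ p) * (A ^ (-γ) * m ^ (p - γ)) * ((2 : ℝ) ^ (p - γ)) ^ k := by
  have e : ((2 : ℝ) ^ (p - γ)) ^ k = ((2 : ℝ) ^ k) ^ (p - γ) := by
    rw [← rpow_natCast, ← rpow_mul (by norm_num), mul_comm, rpow_mul (by norm_num), rpow_natCast]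
  have h2 : (0 : ℝ) < 2 ^ k := by positivity
  rw [e, mul_rpow (by positivity) (by positivity), div_rpow hA.le (by norm_num),
    mul_rpow h2.le hm.le, pow_succ, mul_assoc _ 2 m, mul_rpow h2.le (by positivity),
    mul_rpow (by norm_num) hm.le, rpow_sub hm, rpow_sub h2, rpow_neg h2.le, rpow_neg hm.le,
    rpow_neg (by norm_num : (0 : ℝ) ≤ 3)]
  have := rpow_pos_of_pos h2 γ
  have := rpow_pos_of_pos hm γ
  have := rpow_pos_of_pos (by norm_num : (0 : ℝ) < 3) γ
  field_simp

lemma scale_rpow_eq {A B γ p : ℝ} (hB : 0 ≤ B) (hAB : B < A) :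
    A ^ (-γ) * ((A - B) / A) ^ (p - γ) = A ^ (-p) * (A - B) ^ (-(γ - p)) := by
  have hA : 0 < A := hB.trans_lt hAB
  rw [div_rpow (by linarith) hA.le, neg_sub, rpow_sub hA, rpow_neg hA.le, rpow_neg hA.le]
  have := rpow_pos_of_pos hA γ
  have := rpow_pos_of_pos hA p
  field_simp

lemma HasTailGrowth.integral_rpow_le {μ : Measure ℝ} {p : ℝ} (h : HasTailGrowth μ p) {γ : ℝ}
    (hp : 0 ≤ p) (hγ : p < γ) :
    ∃ C : ℝ, 0 < C ∧ ∀ A B : ℝ, 0 ≤ B → B < A →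
      ∫ s, (A - B * s) ^ (-γ) ∂μ ≤ C * (A ^ (-p) * (A - B) ^ (-(γ - p))) := by
  obtain ⟨C, hC, hup⟩ := h.upper
  have := h.finite
  have hr0 : (0 : ℝ) ≤ 2 ^ (p - γ) := by positivity
  have hr1 : (2 : ℝ) ^ (p - γ) < 1 := rpow_lt_one_of_one_lt_of_neg (by norm_num) (by linarith)
  have hr2 : 0 < (1 - (2 : ℝ) ^ (p - γ))⁻¹ := inv_pos.2 (by linarith)
  refine ⟨C * ((3 : ℝ) ^ γ * 2 ^ p) * (1 - (2 : ℝ) ^ (p - γ))⁻¹, by positivity, ?_⟩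
  intro A B hB hAB
  have hA : 0 < A := hB.trans_lt hAB
  rw [← scale_rpow_eq hB hAB]
  set m := (A - B) / A with hm_def
  have hm : 0 < m := div_pos (by linarith) hA
  obtain ⟨N, hN⟩ : ∃ N : ℕ, 2 ≤ 2 ^ (N + 1) * m := by
    obtain ⟨n, hn⟩ := pow_unbounded_of_one_lt (2 / m) (one_lt_two : (1 : ℝ) < 2)
    refine ⟨n, ?_⟩
    rw [div_lt_iff₀ hm] at hn
    rw [pow_succ]
    nlinarith [mul_pos (pow_pos (two_pos : (0 : ℝ) < 2) n) hm]
  have hint : ∀ k ∈ Finset.range (N + 1), Integrable (fun s => (A / 3 * (2 ^ k * m)) ^ (-γ) *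
      (Set.Ici (1 - 2 ^ (k + 1) * m)).indicator (1 : ℝ → ℝ) s) μ := fun k _ =>
    ((integrable_const (1 : ℝ)).indicator measurableSet_Ici).const_mul _
  calc ∫ s, (A - B * s) ^ (-γ) ∂μ
      ≤ ∫ s, ∑ k ∈ Finset.range (N + 1), (A / 3 * (2 ^ k * m)) ^ (-γ) *
          (Set.Ici (1 - 2 ^ (k + 1) * m)).indicator (1 : ℝ → ℝ) s ∂μ := by
        refine integral_mono_of_nonneg ?_ (integrable_finsetSum _ hint) ?_
        · filter_upwards [h.ae_mem] with s hs
          exact rpow_nonneg (by nlinarith [hs.1, hs.2]) _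
        · filter_upwards [h.ae_mem] with s hs
          exact rpow_neg_le_dyadic_sum hB hAB (hp.trans hγ.le) hs hN
    _ = ∑ k ∈ Finset.range (N + 1), (A / 3 * (2 ^ k * m)) ^ (-γ) *
          μ.real (Set.Ici (1 - 2 ^ (k + 1) * m)) := by
        rw [integral_finsetSum _ hint]
        refine Finset.sum_congr rfl fun k _ => ?_
        rw [integral_const_mul, integral_indicator_one measurableSet_Ici]
    _ ≤ ∑ k ∈ Finset.range (N + 1), (A / 3 * (2 ^ k * m)) ^ (-γ) *
          (C * (2 ^ (k + 1) * m) ^ p) := by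
        gcongr with k _
        exact hup _ (by positivity)
    _ = C * ((3 : ℝ) ^ γ * 2 ^ p) * (A ^ (-γ) * m ^ (p - γ)) *
          ∑ k ∈ Finset.range (N + 1), ((2 : ℝ) ^ (p - γ)) ^ k := by
        rw [Finset.mul_sum]
        refine Finset.sum_congr rfl fun k _ => ?_
        rw [mul_left_comm, dyadic_term_eq hA hm]
        ring
    _ ≤ C * ((3 : ℝ) ^ γ * 2 ^ p) * (A ^ (-γ) * m ^ (p - γ)) * (1 - (2 : ℝ) ^ (p - γ))⁻¹ := by
        gcongr
        rw [← tsum_geometric_of_lt_one hr0 hr1]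
        exact (summable_geometric_of_lt_one hr0 hr1).sum_le_tsum _ fun i _ => by positivity
    _ = _ := by ring

lemma HasTailGrowth.integrable_rpow_mul_rpow {μ : Measure ℝ} {p : ℝ} (h : HasTailGrowth μ p)
    {κ γ A B D : ℝ} (hκ : 0 ≤ κ) (hγ : 0 ≤ γ) (hB : 0 ≤ B) (hAB : B < A) (hAD : A ≤ D) :
    Integrable (fun s => (D - B * s) ^ (-κ) * (A - B * s) ^ (-γ)) μ := by
  have := h.finite
  refine Integrable.of_bound (C := (D - B) ^ (-κ) * (A - B) ^ (-γ))
    (Measurable.aestronglyMeasurable (by fun_prop)) ?_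
  filter_upwards [h.ae_mem] with s hs
  have hs' : B * s ≤ B := by nlinarith [hs.2]
  have e1 : (D - B * s) ^ (-κ) ≤ (D - B) ^ (-κ) :=
    rpow_le_rpow_of_nonpos (by linarith) (by linarith) (by linarith)
  have e2 : (A - B * s) ^ (-γ) ≤ (A - B) ^ (-γ) :=
    rpow_le_rpow_of_nonpos (by linarith) (by linarith) (by linarith)
  have e3 : 0 ≤ (D - B * s) ^ (-κ) := rpow_nonneg (by linarith) _
  have e4 : 0 ≤ (A - B * s) ^ (-γ) := rpow_nonneg (by linarith) _
  rw [Real.norm_of_nonneg (mul_nonneg e3 e4)]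
  exact mul_le_mul e1 e2 e4 (e3.trans e1)

lemma HasTailGrowth.le_integral_rpow_mul_rpow {μ : Measure ℝ} {p : ℝ} (h : HasTailGrowth μ p)
    {κ γ : ℝ} (hκ : 0 ≤ κ) (hγ : 0 ≤ γ) :
    ∃ c : ℝ, 0 < c ∧ ∀ A B D : ℝ, 0 ≤ B → B < A → A ≤ D →
      c * ((D - B) ^ (-κ) * (A ^ (-p) * (A - B) ^ (-(γ - p)))) ≤
        ∫ s, (D - B * s) ^ (-κ) * (A - B * s) ^ (-γ) ∂μ := by
  obtain ⟨c, hc, hlow⟩ := h.lower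
  have := h.finite
  refine ⟨(2 : ℝ) ^ (-κ) * 2 ^ (-γ) * c, by positivity, ?_⟩
  intro A B D hB hAB hAD
  have hA : 0 < A := hB.trans_lt hAB
  have hAB' : 0 < A - B := by linarith
  have hDB' : 0 < D - B := by linarith
  have hm : 0 < (A - B) / A := div_pos hAB' hA
  have hm1 : (A - B) / A ≤ 1 := (div_le_one hA).2 (by linarith)
  have hBm : B * ((A - B) / A) ≤ A - B := by
    rw [mul_div_assoc', div_le_iff₀ hA]
    nlinarith
  have hscale : (A - B) ^ (-γ) * ((A - B) / A) ^ p = A ^ (-p) * (A - B) ^ (-(γ - p)) := by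
    rw [div_rpow hAB'.le hA.le, neg_sub, rpow_sub hAB', rpow_neg hA.le, rpow_neg hAB'.le]
    ring
  calc (2 : ℝ) ^ (-κ) * 2 ^ (-γ) * c * ((D - B) ^ (-κ) * (A ^ (-p) * (A - B) ^ (-(γ - p))))
      = (2 * (D - B)) ^ (-κ) * (2 * (A - B)) ^ (-γ) * (c * ((A - B) / A) ^ p) := by
        rw [← hscale, mul_rpow zero_le_two hDB'.le, mul_rpow zero_le_two hAB'.le]
        ring
    _ ≤ (2 * (D - B)) ^ (-κ) * (2 * (A - B)) ^ (-γ) * μ.real (Set.Ici (1 - (A - B) / A)) := by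
        gcongr
        exact hlow _ hm hm1
    _ = ∫ s, (2 * (D - B)) ^ (-κ) * (2 * (A - B)) ^ (-γ) *
          (Set.Ici (1 - (A - B) / A)).indicator (1 : ℝ → ℝ) s ∂μ := by
        rw [integral_const_mul, integral_indicator_one measurableSet_Ici]
    _ ≤ _ := by
        refine integral_mono_ae
          (((integrable_const (1 : ℝ)).indicator measurableSet_Ici).const_mul _)
          (h.integrable_rpow_mul_rpow hκ hγ hB hAB hAD) ?_
        filter_upwards [h.ae_mem] with s hs
        have hs' : B * s ≤ B := by nlinarith [hs.2]
        by_cases hmem : s ∈ Set.Ici (1 - (A - B) / A)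
        · rw [Set.indicator_of_mem hmem, Pi.one_apply, mul_one]
          have hs1 : B * (1 - s) ≤ A - B :=
            (mul_le_mul_of_nonneg_left (by linarith [Set.mem_Ici.1 hmem]) hB).trans hBm
          have e1 : (2 * (D - B)) ^ (-κ) ≤ (D - B * s) ^ (-κ) :=
            rpow_le_rpow_of_nonpos (by linarith) (by linarith) (by linarith)
          have e2 : (2 * (A - B)) ^ (-γ) ≤ (A - B * s) ^ (-γ) :=
            rpow_le_rpow_of_nonpos (by linarith) (by linarith) (by linarith)
          exact mul_le_mul e1 e2 (by positivity) (rpow_nonneg (by linarith) _)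
        · rw [Set.indicator_of_notMem hmem, mul_zero]
          exact mul_nonneg (rpow_nonneg (by linarith) _) (rpow_nonneg (by linarith) _)

lemma HasTailGrowth.integral_rpow_mul_rpow_le {μ : Measure ℝ} {p : ℝ} (h : HasTailGrowth μ p)
    {κ γ : ℝ} (hκ : 0 ≤ κ) (hp : 0 ≤ p) (hγ : p < γ) :
    ∃ C : ℝ, 0 < C ∧ ∀ A B D : ℝ, 0 ≤ B → B < A → A ≤ D →
      ∫ s, (D - B * s) ^ (-κ) * (A - B * s) ^ (-γ) ∂μ ≤
        C * ((D - B) ^ (-κ) * (A ^ (-p) * (A - B) ^ (-(γ - p)))) := by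
  obtain ⟨C, hC, hup⟩ := h.integral_rpow_le hp hγ
  refine ⟨C, hC, fun A B D hB hAB hAD => ?_⟩
  have hint : Integrable (fun s => (A - B * s) ^ (-γ)) μ := by
    simpa using h.integrable_rpow_mul_rpow le_rfl (hp.trans hγ.le) hB hAB hAD
  calc _ ≤ ∫ s, (D - B) ^ (-κ) * (A - B * s) ^ (-γ) ∂μ := by
        refine integral_mono_ae (h.integrable_rpow_mul_rpow hκ (hp.trans hγ.le) hB hAB hAD)
          (hint.const_mul _) ?_
        filter_upwards [h.ae_mem] with s hs
        have hs' : B * s ≤ B := by nlinarith [hs.2]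
        exact mul_le_mul_of_nonneg_right
          (rpow_le_rpow_of_nonpos (by linarith) (by linarith) (by linarith))
          (rpow_nonneg (by linarith) _)
    _ = (D - B) ^ (-κ) * ∫ s, (A - B * s) ^ (-γ) ∂μ := integral_const_mul _ _
    _ ≤ (D - B) ^ (-κ) * (C * (A ^ (-p) * (A - B) ^ (-(γ - p)))) :=
        mul_le_mul_of_nonneg_left (hup A B hB hAB) (rpow_nonneg (by linarith) _)
    _ = _ := by ring

lemma HasTailGrowth.double_integral_comparable {μ ν : Measure ℝ} {p q : ℝ}
    (hμ : HasTailGrowth μ p) (hν : HasTailGrowth ν q) (hp : 0 ≤ p) (hq : 0 ≤ q) :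
    ∃ c C : ℝ, 0 < c ∧ 0 < C ∧ ∀ z S Q : ℝ, 0 ≤ S → 0 ≤ Q → S + Q < z →
      c * ((z - S) ^ (-q) * (z - Q) ^ (-p) * (z - Q - S) ^ (-1 : ℝ)) ≤
        ∫ u, (∫ v, (z - S * u - Q * v) ^ (-(p + q + 1)) ∂ν) ∂μ ∧
      ∫ u, (∫ v, (z - S * u - Q * v) ^ (-(p + q + 1)) ∂ν) ∂μ ≤
        C * ((z - S) ^ (-q) * (z - Q) ^ (-p) * (z - Q - S) ^ (-1 : ℝ)) := by
  have := hμ.finite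
  have := hν.finite
  obtain ⟨c₁, hc₁, hlow₁⟩ := hν.le_integral_rpow_mul_rpow le_rfl (γ := p + q + 1) (by linarith)
  obtain ⟨C₁, hC₁, hup₁⟩ := hν.integral_rpow_mul_rpow_le le_rfl hq (γ := p + q + 1) (by linarith)
  obtain ⟨c₂, hc₂, hlow₂⟩ := hμ.le_integral_rpow_mul_rpow hq (γ := p + 1) (by linarith)
  obtain ⟨C₂, hC₂, hup₂⟩ := hμ.integral_rpow_mul_rpow_le hq hp (γ := p + 1) (by linarith)
  have e₁ : p + q + 1 - q = p + 1 := by ring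
  have e₂ : p + 1 - p = 1 := by ring
  simp only [neg_zero, rpow_zero, one_mul, e₁] at hlow₁ hup₁
  simp only [e₂] at hlow₂ hup₂
  refine ⟨c₁ * c₂, C₁ * C₂, by positivity, by positivity, fun z S Q hS hQ hz => ?_⟩
  have hSQ : S < z - Q := by linarith
  have hQz : z - Q ≤ z := by linarith
  have hGint := hμ.integrable_rpow_mul_rpow (γ := p + 1) hq (by linarith) hS hSQ hQz
  have hinner : ∀ u ∈ Set.Icc (-1 : ℝ) 1,
      c₁ * ((z - S * u) ^ (-q) * (z - Q - S * u) ^ (-(p + 1))) ≤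
        ∫ v, (z - S * u - Q * v) ^ (-(p + q + 1)) ∂ν ∧
      ∫ v, (z - S * u - Q * v) ^ (-(p + q + 1)) ∂ν ≤
        C₁ * ((z - S * u) ^ (-q) * (z - Q - S * u) ^ (-(p + 1))) := by
    intro u hu
    have hSu : S * u ≤ S := by nlinarith [hu.2]
    have e : z - Q - S * u = z - S * u - Q := by ring
    rw [e]
    exact ⟨hlow₁ _ Q _ hQ (by linarith) le_rfl, hup₁ _ Q _ hQ (by linarith) le_rfl⟩
  have hG0 : ∀ u ∈ Set.Icc (-1 : ℝ) 1,
      0 ≤ (z - S * u) ^ (-q) * (z - Q - S * u) ^ (-(p + 1)) := by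
    intro u hu
    have hSu : S * u ≤ S := by nlinarith [hu.2]
    exact mul_nonneg (rpow_nonneg (by linarith) _) (rpow_nonneg (by linarith) _)
  have hFmeas : AEStronglyMeasurable
      (fun u => ∫ v, (z - S * u - Q * v) ^ (-(p + q + 1)) ∂ν) μ := by
    have hm : Measurable (fun x : ℝ × ℝ => (z - S * x.1 - Q * x.2) ^ (-(p + q + 1))) := by
      fun_prop
    exact hm.stronglyMeasurable.integral_prod_right'.aestronglyMeasurable
  have hFint : Integrable (fun u => ∫ v, (z - S * u - Q * v) ^ (-(p + q + 1)) ∂ν) μ := by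
    refine (hGint.const_mul C₁).mono' hFmeas ?_
    filter_upwards [hμ.ae_mem] with u hu
    rw [Real.norm_of_nonneg ((mul_nonneg hc₁.le (hG0 u hu)).trans (hinner u hu).1)]
    exact (hinner u hu).2
  constructor
  · calc _ = c₁ * (c₂ * ((z - S) ^ (-q) * ((z - Q) ^ (-p) * (z - Q - S) ^ (-1 : ℝ)))) := by ring
      _ ≤ c₁ * ∫ u, (z - S * u) ^ (-q) * (z - Q - S * u) ^ (-(p + 1)) ∂μ :=
          mul_le_mul_of_nonneg_left (hlow₂ _ _ _ hS hSQ hQz) hc₁.le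
      _ = ∫ u, c₁ * ((z - S * u) ^ (-q) * (z - Q - S * u) ^ (-(p + 1))) ∂μ :=
          (integral_const_mul _ _).symm
      _ ≤ _ := by
          refine integral_mono_ae (hGint.const_mul c₁) hFint ?_
          filter_upwards [hμ.ae_mem] with u hu using (hinner u hu).1
  · calc _ ≤ ∫ u, C₁ * ((z - S * u) ^ (-q) * (z - Q - S * u) ^ (-(p + 1))) ∂μ := by
          refine integral_mono_ae hFint (hGint.const_mul C₁) ?_
          filter_upwards [hμ.ae_mem] with u hu using (hinner u hu).2
      _ = C₁ * ∫ u, (z - S * u) ^ (-q) * (z - Q - S * u) ^ (-(p + 1)) ∂μ :=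
          integral_const_mul _ _
      _ ≤ C₁ * (C₂ * ((z - S) ^ (-q) * ((z - Q) ^ (-p) * (z - Q - S) ^ (-1 : ℝ)))) :=
          mul_le_mul_of_nonneg_left (hup₂ _ _ _ hS hSQ hQz) hC₁.le
      _ = _ := by ring

lemma sinh_le_mul_exp (x : ℝ) : Real.sinh x ≤ x * Real.exp x := by
  have h := Real.add_one_le_exp (-(2 * x))
  have e : Real.exp (-x) = Real.exp x * Real.exp (-(2 * x)) := by
    rw [← Real.exp_add]; ring_nf
  rw [Real.sinh_eq, e]
  nlinarith [Real.exp_pos x]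

lemma cosh_half_sub_one_eq (t : ℝ) : Real.cosh (t/2) - 1 = 2 * Real.sinh (t/4) ^ 2 := by
  have e : t/2 = 2 * (t/4) := by ring
  rw [e, Real.cosh_two_mul, Real.cosh_sq]
  ring

lemma sq_div_eight_le_cosh_half_sub_one {t : ℝ} (ht : 0 ≤ t) :
    t ^ 2 / 8 ≤ Real.cosh (t/2) - 1 := by
  have h : t/4 ≤ Real.sinh (t/4) := Real.self_le_sinh_iff.2 (by linarith)
  rw [cosh_half_sub_one_eq]
  nlinarith

lemma cosh_half_sub_one_le {t T : ℝ} (ht : 0 ≤ t) (htT : t ≤ T) :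
    Real.cosh (t/2) - 1 ≤ Real.exp (T/2) / 8 * t ^ 2 := by
  have h0 : 0 ≤ Real.sinh (t/4) := Real.sinh_nonneg_iff.2 (by linarith)
  have h1 : Real.sinh (t/4) ≤ t/4 * Real.exp (T/4) :=
    (sinh_le_mul_exp _).trans (by gcongr)
  have e : Real.exp (T/2) = Real.exp (T/4) ^ 2 := by
    rw [← Real.exp_nat_mul]; congr 1; push_cast; ring
  rw [cosh_half_sub_one_eq, e]
  calc 2 * Real.sinh (t/4) ^ 2 ≤ 2 * (t/4 * Real.exp (T/4)) ^ 2 := by gcongr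
    _ = _ := by ring

lemma sq_div_le_one_sub_cos {x : ℝ} (hx : |x| ≤ π) : 2 / π ^ 2 * x ^ 2 ≤ 1 - Real.cos x := by
  linarith [Real.cos_le_one_sub_mul_cos_sq hx]

lemma one_sub_cos_mul_cos_comparable {x y : ℝ} (hx : |x| ≤ π / 2) (hy : |y| ≤ π / 2) :
    1 / π ^ 2 * (x ^ 2 + y ^ 2) ≤ 1 - Real.cos x * Real.cos y ∧
      1 - Real.cos x * Real.cos y ≤ (x ^ 2 + y ^ 2) / 2 := by
  have hx' := sq_div_le_one_sub_cos (x := x) (by linarith [Real.pi_pos])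
  have hy' := sq_div_le_one_sub_cos (x := y) (by linarith [Real.pi_pos])
  have hx2 := Real.one_sub_sq_div_two_le_cos (x := x)
  have hy2 := Real.one_sub_sq_div_two_le_cos (x := y)
  have hcx : 0 ≤ Real.cos x :=
    Real.cos_nonneg_of_mem_Icc ⟨by linarith [(abs_le.1 hx).1], (abs_le.1 hx).2⟩
  have hcy : 0 ≤ Real.cos y :=
    Real.cos_nonneg_of_mem_Icc ⟨by linarith [(abs_le.1 hy).1], (abs_le.1 hy).2⟩
  have hcx1 := Real.cos_le_one x
  have hcy1 := Real.cos_le_one y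
  constructor
  · have e : 1 / π ^ 2 * (x ^ 2 + y ^ 2) = (2 / π ^ 2 * x ^ 2 + 2 / π ^ 2 * y ^ 2) / 2 := by ring
    rw [e]
    nlinarith
  · nlinarith

lemma rpow_neg_comparable {k K X Y e : ℝ} (hk : 0 < k) (hK : 0 < K) (hY : 0 < Y)
    (h1 : k * Y ≤ X) (h2 : X ≤ K * Y) (he : 0 ≤ e) :
    K ^ (-e) * Y ^ (-e) ≤ X ^ (-e) ∧ X ^ (-e) ≤ k ^ (-e) * Y ^ (-e) := by
  rw [← mul_rpow hK.le hY.le, ← mul_rpow hk.le hY.le]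
  exact ⟨rpow_le_rpow_of_nonpos ((mul_pos hk hY).trans_le h1) h2 (by linarith),
    rpow_le_rpow_of_nonpos (mul_pos hk hY) h1 (by linarith)⟩

lemma muab_pos {a b : ℝ} (ha : -1/2 ≤ a) (hb : -1/2 ≤ b) : 0 < muab a b := by
  unfold muab
  rw [integral_Icc_eq_integral_Ioc, ← intervalIntegral.integral_of_le Real.pi_pos.le]
  refine intervalIntegral.intervalIntegral_pos_of_pos_on ?_ ?_ Real.pi_pos
  · refine Continuous.intervalIntegrable ?_ _ _
    refine Continuous.mul ?_ ?_
    · exact Continuous.rpow_const (by fun_prop) fun _ => Or.inr (by linarith)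
    · exact Continuous.rpow_const (by fun_prop) fun _ => Or.inr (by linarith)
  · intro x hx
    have h1 : 0 < Real.sin (x/2) :=
      Real.sin_pos_of_pos_of_lt_pi (by linarith [hx.1]) (by linarith [hx.1, hx.2])
    have h2 : 0 < Real.cos (x/2) :=
      Real.cos_pos_of_mem_Ioo ⟨by linarith [hx.1, Real.pi_pos], by linarith [hx.2]⟩
    positivity

lemma cab_pos {a b : ℝ} (ha : -1/2 ≤ a) (hb : -1/2 ≤ b) : 0 < cab a b :=
  div_pos (rpow_pos_of_pos two_pos _) (muab_pos ha hb)

lemma poissonJacobi_eq (a b t θ φ : ℝ) :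
    poissonJacobi a b t θ φ = cab a b * Real.sinh (t/2) *
      ∫ u, (∫ v, (Real.cosh (t/2) - Real.sin (θ/2) * Real.sin (φ/2) * u -
        Real.cos (θ/2) * Real.cos (φ/2) * v) ^ (-(a + 1/2 + (b + 1/2) + 1)) ∂(jacobiPi b))
          ∂(jacobiPi a) := by
  unfold poissonJacobi qfun
  have e : a + b + 2 = a + 1/2 + (b + 1/2) + 1 := by ring
  rw [e]
  congr 1
  refine integral_congr_ae (Filter.Eventually.of_forall fun u => ?_)
  refine integral_congr_ae (Filter.Eventually.of_forall fun v => ?_)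
  simp only
  congr 1
  ring

lemma cosh_sub_cos_mul_cos_comparable {t T θ φ : ℝ} (ht : 0 ≤ t) (htT : t ≤ T)
    (hθ : |θ| ≤ π) (hφ : |φ| ≤ π) :
    1 / (4 * π ^ 2) * (t ^ 2 + θ ^ 2 + φ ^ 2) ≤
        Real.cosh (t/2) - Real.cos (θ/2) * Real.cos (φ/2) ∧
      Real.cosh (t/2) - Real.cos (θ/2) * Real.cos (φ/2) ≤
        Real.exp (T/2) / 8 * (t ^ 2 + θ ^ 2 + φ ^ 2) := by
  have hT : 1 ≤ Real.exp (T/2) := Real.one_le_exp (by linarith)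
  have h8 : 1 / (4 * π ^ 2) ≤ 1 / 8 :=
    one_div_le_one_div_of_le (by norm_num) (by nlinarith [Real.pi_gt_three])
  have h1 := sq_div_eight_le_cosh_half_sub_one ht
  have h2 := cosh_half_sub_one_le ht htT
  obtain ⟨h3, h4⟩ := one_sub_cos_mul_cos_comparable (x := θ/2) (y := φ/2)
    (by rw [abs_div, abs_two]; linarith) (by rw [abs_div, abs_two]; linarith)
  have e : 1 / π ^ 2 * ((θ/2) ^ 2 + (φ/2) ^ 2) = 1 / (4 * π ^ 2) * (θ ^ 2 + φ ^ 2) := by ring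
  rw [e] at h3
  constructor
  · nlinarith [sq_nonneg t]
  · nlinarith [sq_nonneg θ, sq_nonneg φ]

lemma mul_sandwich {x x₁ x₂ y y₁ y₂ : ℝ} (hx₁ : 0 ≤ x₁) (hy₁ : 0 ≤ y₁)
    (hx : x₁ ≤ x ∧ x ≤ x₂) (hy : y₁ ≤ y ∧ y ≤ y₂) : x₁ * y₁ ≤ x * y ∧ x * y ≤ x₂ * y₂ :=
  ⟨mul_le_mul hx.1 hy.1 hy₁ (hx₁.trans hx.1),
    mul_le_mul hx.2 hy.2 (hy₁.trans hy.1) (hx₁.trans (hx.1.trans hx.2))⟩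

/-- Theorem A.1 (short time part): for α, β ≥ -1/2 and 0 < t ≤ T, uniformly in θ, φ ∈ [0,π],
ℋ_t^{(α,β)}(θ,φ) ≃ (t²+θ²+φ²)^{-α-1/2}(t²+(π-θ)²+(π-φ)²)^{-β-1/2} t/(t²+(θ-φ)²). -/
theorem stmt18 (a b T : ℝ) (ha : -1/2 ≤ a) (hb : -1/2 ≤ b) (hT : 0 < T) :
    ∃ c C : ℝ, 0 < c ∧ 0 < C ∧ ∀ θ φ t : ℝ, θ ∈ Set.Icc 0 π → φ ∈ Set.Icc 0 π →
      0 < t → t ≤ T →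
      c * ((t ^ 2 + θ ^ 2 + φ ^ 2) ^ (-a - 1/2) *
            (t ^ 2 + (π - θ) ^ 2 + (π - φ) ^ 2) ^ (-b - 1/2) *
            (t / (t ^ 2 + (θ - φ) ^ 2))) ≤ poissonJacobi a b t θ φ ∧
      poissonJacobi a b t θ φ ≤
        C * ((t ^ 2 + θ ^ 2 + φ ^ 2) ^ (-a - 1/2) *
            (t ^ 2 + (π - θ) ^ 2 + (π - φ) ^ 2) ^ (-b - 1/2) *
            (t / (t ^ 2 + (θ - φ) ^ 2))) := by
  set S : ℝ → ℝ → ℝ := fun θ φ => Real.sin (θ/2) * Real.sin (φ/2)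
  set Q : ℝ → ℝ → ℝ := fun θ φ => Real.cos (θ/2) * Real.cos (φ/2)
  have hp : 0 ≤ a + 1/2 := by linarith
  have hq : 0 ≤ b + 1/2 := by linarith
  obtain ⟨c, C, hc, hC, hI⟩ := (hasTailGrowth_jacobiPi ha).double_integral_comparable
    (hasTailGrowth_jacobiPi hb) hp hq
  have hab := cab_pos ha hb
  have hk : 0 < 1 / (4 * π ^ 2) := by positivity
  have hK : 0 < Real.exp (T/2) / 8 := by positivity
  set k := 1 / (4 * π ^ 2)
  set K := Real.exp (T/2) / 8
  refine ⟨cab a b * (1/2) * (c * (K ^ (-(b + 1/2)) * K ^ (-(a + 1/2)) * K ^ (-1 : ℝ))),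
    cab a b * (Real.exp (T/2) / 2) * (C * (k ^ (-(b + 1/2)) * k ^ (-(a + 1/2)) * k ^ (-1 : ℝ))),
    by positivity, by positivity, fun θ φ t hθ hφ ht htT => ?_⟩
  have ht2 : 0 < t ^ 2 := by positivity
  have hS0 : 0 ≤ S θ φ := mul_nonneg
    (Real.sin_nonneg_of_nonneg_of_le_pi (by linarith [hθ.1]) (by linarith [hθ.1, hθ.2]))
    (Real.sin_nonneg_of_nonneg_of_le_pi (by linarith [hφ.1]) (by linarith [hφ.1, hφ.2]))
  have hQ0 : 0 ≤ Q θ φ := mul_nonneg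
    (Real.cos_nonneg_of_mem_Icc ⟨by linarith [hθ.1, Real.pi_pos], by linarith [hθ.2]⟩)
    (Real.cos_nonneg_of_mem_Icc ⟨by linarith [hφ.1, Real.pi_pos], by linarith [hφ.2]⟩)
  obtain ⟨hA1, hA2⟩ := cosh_sub_cos_mul_cos_comparable ht.le htT
    (abs_le.2 ⟨by linarith [hθ.1, Real.pi_pos], hθ.2⟩)
    (abs_le.2 ⟨by linarith [hφ.1, Real.pi_pos], hφ.2⟩)
  obtain ⟨hB1, hB2⟩ := cosh_sub_cos_mul_cos_comparable (θ := π - θ) (φ := π - φ) ht.le htT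
    (abs_le.2 ⟨by linarith [hθ.2, Real.pi_pos], by linarith [hθ.1]⟩)
    (abs_le.2 ⟨by linarith [hφ.2, Real.pi_pos], by linarith [hφ.1]⟩)
  obtain ⟨hD1, hD2⟩ := cosh_sub_cos_mul_cos_comparable (θ := θ - φ) (φ := 0) ht.le htT
    (abs_le.2 ⟨by linarith [hθ.1, hφ.2], by linarith [hθ.2, hφ.1]⟩)
    (by simpa using Real.pi_pos.le)
  have eB : Real.cos ((π - θ)/2) * Real.cos ((π - φ)/2) = S θ φ := by
    rw [sub_div, sub_div, Real.cos_pi_div_two_sub, Real.cos_pi_div_two_sub]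
  have eD : Real.cosh (t/2) - Real.cos ((θ - φ)/2) * Real.cos (0/2) =
      Real.cosh (t/2) - Q θ φ - S θ φ := by
    rw [zero_div, Real.cos_zero, mul_one, sub_div, Real.cos_sub]
    ring
  have eY : t ^ 2 + (θ - φ) ^ 2 + 0 ^ 2 = t ^ 2 + (θ - φ) ^ 2 := by ring
  rw [eB] at hB1 hB2
  rw [eD, eY] at hD1 hD2
  have hY3 : 0 < t ^ 2 + (θ - φ) ^ 2 := by positivity
  have hpos : 0 < Real.cosh (t/2) - Q θ φ - S θ φ := (mul_pos hk hY3).trans_le hD1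
  obtain ⟨hI1, hI2⟩ := hI (Real.cosh (t/2)) (S θ φ) (Q θ φ) hS0 hQ0 (by linarith)
  obtain ⟨a1, a2⟩ := rpow_neg_comparable hk hK (by positivity) hA1 hA2 hp
  obtain ⟨b1, b2⟩ := rpow_neg_comparable hk hK (by positivity) hB1 hB2 hq
  obtain ⟨d1, d2⟩ := rpow_neg_comparable hk hK hY3 hD1 hD2 zero_le_one
  have hsinh1 : 1/2 * t ≤ Real.sinh (t/2) := by
    linarith [Real.self_le_sinh_iff.2 (by linarith : 0 ≤ t/2)]
  have hsinh2 : Real.sinh (t/2) ≤ Real.exp (T/2) / 2 * t :=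
    (sinh_le_mul_exp _).trans (by
      have : Real.exp (t/2) ≤ Real.exp (T/2) := Real.exp_le_exp.2 (by linarith)
      nlinarith)
  have ea : -a - 1/2 = -(a + 1/2) := by ring
  have eb : -b - 1/2 = -(b + 1/2) := by ring
  rw [poissonJacobi_eq, ea, eb, div_eq_mul_inv t, ← rpow_neg_one (t ^ 2 + (θ - φ) ^ 2)]
  have hs0 : 0 ≤ Real.sinh (t/2) := by linarith
  have hX := mul_sandwich (by positivity) (by positivity)
    (mul_sandwich (by positivity) (by positivity) ⟨b1, b2⟩ ⟨a1, a2⟩) ⟨d1, d2⟩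
  constructor
  · refine Eq.trans_le ?_ (mul_le_mul (mul_le_mul_of_nonneg_left hsinh1 hab.le)
      ((mul_le_mul_of_nonneg_left hX.1 hc.le).trans hI1) (by positivity) (by positivity))
    ring
  · refine (mul_le_mul_of_nonneg_left (hI2.trans (mul_le_mul_of_nonneg_left hX.2 hC.le))
      (by positivity)).trans ((mul_le_mul_of_nonneg_right
        (mul_le_mul_of_nonneg_left hsinh2 hab.le) (by positivity)).trans_eq ?_)
    ring
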